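/- For every natural number r ≥ 0, the residue classes of the monomials α^a·β^b·γ^c with a + b + c < r form a ℂ-vector-space basis of F_r = ℂ[α,β,γ]/J_r; in particular dim_ℂ F_r = binom(r+2, 3). -/

import Mathlib

open MvPolynomial

/-- The triple (R¹_r, R²_r, R³_r) of polynomials in ℂ[α,β,γ] (α = X 0, β = X 1, γ = X 2). -/
noncomputable def Rr : ℕ → MvPolynomial (Fin 3) ℂ × MvPolynomial (Fin 3) ℂ × MvPolynomial (Fin 3) ℂ
  | 0 => (1, 0, 0)
  | (r + 1) =>
      (X 0 * (Rr r).1 + C ((r : ℂ) ^ 2) * (Rr r).2.1,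
       (X 1 + C ((-1 : ℂ) ^ (r + 1) * 8)) * (Rr r).1 + C ((2 * r : ℂ) / (r + 1)) * (Rr r).2.2,
       X 2 * (Rr r).1)

/-- The ideal J_r = (R¹_r, R²_r, R³_r) ⊆ ℂ[α,β,γ]. -/
noncomputable def Jr (r : ℕ) : Ideal (MvPolynomial (Fin 3) ℂ) :=
  Ideal.span {(Rr r).1, (Rr r).2.1, (Rr r).2.2}

/-!
It suffices that `J_r` is a complement of the space `V_r` of polynomials of degree less than `r`.
As `R³_{r+1} = γ R¹_r`, and as the recursion gives `J_r = (R¹_{r+1}, R²_{r+1}, R¹_r)`, one has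
`(J_{r+1} : γ) = J_r` once `R¹_{r+1}` and `R²_{r+1}` are coprime modulo `γ`. Since also
`(V_{r+1} : γ) = V_r`, the exact sequence of multiplication by `γ` and reduction modulo `γ` reduces
the claim for `J_{r+1}` to the one for `J_r` and to the one for the image of `J_{r+1}` in `ℂ[α, β]`.
This image is generated by `B_{r+1}` and `(β - b_r) B_r`, where `B_r` is `R¹_r` modulo `γ` and `b_r`
is the constant `(-1)^r * 8`. The same argument with `β - b_r` in place of `γ` leaves the principal
ideal of `ℂ[α]` generated by `B_{r+1}(α, b_r)`, which is monic of degree `r + 1` in `α`.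
-/

theorem isCompl_of_exact {R M' M M'' : Type*} [Ring R] [AddCommGroup M'] [AddCommGroup M]
    [AddCommGroup M''] [Module R M'] [Module R M] [Module R M''] {f : M' →ₗ[R] M}
    {g : M →ₗ[R] M''} (hfg : Function.Exact f g) {p q : Submodule R M}
    (h' : IsCompl (p.comap f) (q.comap f)) (h'' : IsCompl (p.map g) (q.map g)) : IsCompl p q := by
  constructor
  · refine Submodule.disjoint_def.2 fun x hxp hxq => ?_
    have hgx : g x = 0 := Submodule.disjoint_def.1 h''.disjoint _
      (Submodule.mem_map_of_mem hxp) (Submodule.mem_map_of_mem hxq)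
    obtain ⟨y, rfl⟩ := (hfg x).1 hgx
    rw [Submodule.disjoint_def.1 h'.disjoint y hxp hxq, map_zero]
  · refine Submodule.codisjoint_iff_exists_add_eq.2 fun x => ?_
    obtain ⟨-, -, ⟨a, ha, rfl⟩, ⟨b, hb, rfl⟩, hab⟩ :=
      Submodule.codisjoint_iff_exists_add_eq.1 h''.codisjoint (g x)
    obtain ⟨y, hy⟩ := (hfg (x - a - b)).1 (by rw [map_sub, map_sub, ← hab]; abel)
    obtain ⟨a', b', ha', hb', rfl⟩ := Submodule.codisjoint_iff_exists_add_eq.1 h'.codisjoint y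
    refine ⟨a + f a', b + f b', p.add_mem ha ha', q.add_mem hb hb', ?_⟩
    rw [add_add_add_comm, ← map_add, hy]
    abel

section TotalDegree

variable {σ τ R : Type*} [CommRing R] {r : ℕ}

variable (σ R) in
/-- The space of polynomials of total degree less than `r`. It is cut out by the supports rather
than by `totalDegree`, so that it is zero for `r = 0` (while `totalDegree 0 = 0`). -/
noncomputable abbrev totalDegreeLT (r : ℕ) : Submodule R (MvPolynomial σ R) :=
  restrictSupport R {m | m.degree < r}

theorem mem_totalDegreeLT_iff_forall {p : MvPolynomial σ R} :
    p ∈ totalDegreeLT σ R r ↔ ∀ m ∈ p.support, m.degree < r :=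
  Iff.rfl

theorem mem_totalDegreeLT {p : MvPolynomial σ R} :
    p ∈ totalDegreeLT σ R r ↔ p = 0 ∨ p.totalDegree < r := by
  rw [mem_totalDegreeLT_iff_forall]
  constructor
  · refine fun h => or_iff_not_imp_left.2 fun hp => ?_
    obtain ⟨m, hm⟩ := support_nonempty.2 hp
    exact (Finset.sup_lt_iff ((Nat.zero_le _).trans_lt (h m hm))).2 h
  · rintro (rfl | h) m hm
    · simp at hm
    · exact (le_totalDegree hm).trans_lt h

theorem monomial_mem_totalDegreeLT {m : σ →₀ ℕ} (hm : m.degree < r) (a : R) :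
    monomial m a ∈ totalDegreeLT σ R r :=
  (monomial_mem_restrictSupport R).2 (Or.inl hm)

theorem totalDegreeLT_mono {k : ℕ} (h : k ≤ r) : totalDegreeLT σ R k ≤ totalDegreeLT σ R r :=
  restrictSupport_mono R fun _ hm => lt_of_lt_of_le hm h

theorem mul_mem_totalDegreeLT (p : MvPolynomial σ R) {q : MvPolynomial σ R}
    (hq : q ∈ totalDegreeLT σ R r) : p * q ∈ totalDegreeLT σ R (p.totalDegree + r) := by
  rw [mem_totalDegreeLT] at hq ⊢
  obtain rfl | hq := hq
  · exact Or.inl (mul_zero p)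
  · exact Or.inr ((totalDegree_mul p q).trans_lt (Nat.add_lt_add_left hq _))

theorem C_mul_mem_totalDegreeLT (a : R) {p : MvPolynomial σ R} (hp : p ∈ totalDegreeLT σ R r) :
    C a * p ∈ totalDegreeLT σ R r := by
  rw [C_mul']
  exact Submodule.smul_mem _ a hp

theorem mul_mem_totalDegreeLT_iff [IsDomain R] {p q : MvPolynomial σ R} (hp : p ≠ 0) :
    p * q ∈ totalDegreeLT σ R (p.totalDegree + r) ↔ q ∈ totalDegreeLT σ R r := by
  refine ⟨fun h => ?_, mul_mem_totalDegreeLT p⟩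
  rw [mem_totalDegreeLT] at h ⊢
  refine or_iff_not_imp_left.2 fun hq => ?_
  have := h.resolve_left (mul_ne_zero hp hq)
  rwa [totalDegree_mul_of_isDomain hp hq, Nat.add_lt_add_iff_left] at this

theorem totalDegree_X_sub_C [Nontrivial R] (i : σ) (s : R) :
    (X i - C s : MvPolynomial σ R).totalDegree = 1 := by
  rw [sub_eq_add_neg, ← C_neg, totalDegree_add_eq_left_of_totalDegree_lt] <;>
    simp [totalDegree_X, -C_neg, -map_neg]

theorem X_sub_C_ne_zero [Nontrivial R] (i : σ) (s : R) : (X i - C s : MvPolynomial σ R) ≠ 0 := by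
  intro h
  simpa [h] using totalDegree_X_sub_C i s

theorem X_sub_C_mul_mem_totalDegreeLT_iff [IsDomain R] (i : σ) (s : R) {p : MvPolynomial σ R} :
    (X i - C s) * p ∈ totalDegreeLT σ R (r + 1) ↔ p ∈ totalDegreeLT σ R r := by
  simpa only [totalDegree_X_sub_C, add_comm 1 r] using
    mul_mem_totalDegreeLT_iff (r := r) (q := p) (X_sub_C_ne_zero i s)

theorem totalDegree_aeval_le {g : σ → MvPolynomial τ R} (hg : ∀ i, (g i).totalDegree ≤ 1)
    (p : MvPolynomial σ R) : (aeval g p).totalDegree ≤ p.totalDegree := by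
  rw [aeval_def, eval₂_eq]
  refine totalDegree_finsetSum_le fun m hm => ?_
  calc (algebraMap R (MvPolynomial τ R) (coeff m p) * ∏ i ∈ m.support, g i ^ m i).totalDegree
      ≤ 0 + ∑ i ∈ m.support, m i * (g i).totalDegree := by
        refine (totalDegree_mul _ _).trans (add_le_add (totalDegree_C _).le ?_)
        exact (totalDegree_finsetProd _ _).trans (Finset.sum_le_sum fun i _ => totalDegree_pow _ _)
    _ ≤ m.degree := by
        rw [zero_add]
        exact Finset.sum_le_sum fun i _ => mul_le_of_le_one_right' (hg i)
    _ ≤ p.totalDegree := le_totalDegree hm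

theorem aeval_mem_totalDegreeLT {g : σ → MvPolynomial τ R} (hg : ∀ i, (g i).totalDegree ≤ 1)
    {p : MvPolynomial σ R} (hp : p ∈ totalDegreeLT σ R r) : aeval g p ∈ totalDegreeLT τ R r := by
  rw [mem_totalDegreeLT] at hp ⊢
  exact hp.imp (fun h => by rw [h, map_zero]) (totalDegree_aeval_le hg p).trans_lt

theorem notMem_totalDegreeLT_of_sub_X_pow_mem [Nontrivial R] {i : σ} {p : MvPolynomial σ R}
    (hp : p - X i ^ r ∈ totalDegreeLT σ R r) : p ∉ totalDegreeLT σ R r := by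
  intro h
  have hX : (X i ^ r : MvPolynomial σ R) ∈ totalDegreeLT σ R r := by
    simpa using Submodule.sub_mem _ h hp
  rw [mem_totalDegreeLT, totalDegree_X_pow] at hX
  exact hX.elim (by simp [X_pow_eq_monomial]) (lt_irrefl r)

theorem span_singleton_sup_totalDegreeLT_eq_top {p : MvPolynomial (Fin 1) R}
    (hp : p - X 0 ^ r ∈ totalDegreeLT (Fin 1) R r) :
    (Ideal.span {p}).restrictScalars R ⊔ totalDegreeLT (Fin 1) R r = ⊤ := by
  nontriviality R
  suffices h : ∀ k, totalDegreeLT (Fin 1) R k ≤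
      (Ideal.span {p}).restrictScalars R ⊔ totalDegreeLT (Fin 1) R r from
    eq_top_iff.2 fun f _ => h _ (mem_totalDegreeLT.2 (Or.inr (Nat.lt_succ_self f.totalDegree)))
  intro k
  induction k with
  | zero => exact (totalDegreeLT_mono (Nat.zero_le r)).trans le_sup_right
  | succ k ih =>
    rcases lt_or_ge k r with hk | hk
    · exact (totalDegreeLT_mono hk).trans le_sup_right
    rw [totalDegreeLT, restrictSupport_eq_span, Submodule.span_le]
    rintro - ⟨m, hm, rfl⟩
    rcases (Nat.lt_succ_iff.1 hm).lt_or_eq with hm | hm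
    · exact ih (monomial_mem_totalDegreeLT hm 1)
    have hX : (monomial m 1 : MvPolynomial (Fin 1) R) =
        X 0 ^ (k - r) * p - X 0 ^ (k - r) * (p - X 0 ^ r) := by
      have : m = Finsupp.single 0 k := by
        ext
        simpa [Finsupp.degree_eq_sum] using hm
      rw [this, ← X_pow_eq_monomial, mul_sub, ← pow_add, Nat.sub_add_cancel hk]
      abel
    have hlow := mul_mem_totalDegreeLT (X 0 ^ (k - r)) hp
    rw [totalDegree_X_pow, Nat.sub_add_cancel hk] at hlow
    simp only [hX]
    exact Submodule.sub_mem _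
      (Submodule.mem_sup_left (Ideal.mul_mem_left _ _ (Ideal.mem_span_singleton_self p))) (ih hlow)

theorem isCompl_span_singleton_totalDegreeLT [IsDomain R] {p : MvPolynomial (Fin 1) R}
    (hp : p - X 0 ^ r ∈ totalDegreeLT (Fin 1) R r) :
    IsCompl ((Ideal.span {p}).restrictScalars R) (totalDegreeLT (Fin 1) R r) := by
  refine ⟨Submodule.disjoint_def.2 fun f hfp hf => ?_,
    codisjoint_iff.2 (span_singleton_sup_totalDegreeLT_eq_top hp)⟩
  obtain ⟨g, rfl⟩ := Ideal.mem_span_singleton.1 hfp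
  by_contra hpg
  have hdeg := (mem_totalDegreeLT.1 hf).resolve_left hpg
  rw [totalDegree_mul_of_isDomain (left_ne_zero_of_mul hpg) (right_ne_zero_of_mul hpg)] at hdeg
  exact notMem_totalDegreeLT_of_sub_X_pow_mem hp
    (mem_totalDegreeLT.2 (Or.inr ((Nat.le_add_right _ _).trans_lt hdeg)))

end TotalDegree

section EvalLast

variable {R : Type*} [CommRing R] {n : ℕ}

/-- Specialization of the last variable to the constant `s`. -/
noncomputable def evalLast (s : R) : MvPolynomial (Fin (n + 1)) R →ₐ[R] MvPolynomial (Fin n) R :=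
  aeval (Fin.snoc (α := fun _ => MvPolynomial (Fin n) R) X (C s))

@[simp]
theorem evalLast_X_castSucc (s : R) (i : Fin n) : evalLast s (X i.castSucc) = X i := by
  simp [evalLast]

@[simp]
theorem evalLast_X_last (s : R) : evalLast s (X (Fin.last n)) = C s := by
  simp [evalLast]

@[simp]
theorem evalLast_C (s a : R) : evalLast (n := n) s (C a) = C a :=
  (evalLast s).commutes a

@[simp]
theorem evalLast_rename_castSucc (s : R) (p : MvPolynomial (Fin n) R) :
    evalLast s (rename Fin.castSucc p) = p := by
  have : ((evalLast s).comp (rename Fin.castSucc)) = AlgHom.id R (MvPolynomial (Fin n) R) := by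
    ext i
    simp
  exact DFunLike.congr_fun this p

theorem evalLast_surjective (s : R) : Function.Surjective (evalLast (n := n) s) :=
  fun p => ⟨_, evalLast_rename_castSucc s p⟩

theorem X_last_sub_C_dvd_sub_rename_evalLast (s : R) (p : MvPolynomial (Fin (n + 1)) R) :
    X (Fin.last n) - C s ∣ p - rename Fin.castSucc (evalLast s p) := by
  induction p using MvPolynomial.induction_on with
  | C a => simp
  | add p q hp hq => simpa only [map_add, add_sub_add_comm] using dvd_add hp hq
  | mul_X p i hp =>
    have hi : X (Fin.last n) - C s ∣
        X i - rename Fin.castSucc (evalLast s (X i)) := by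
      refine Fin.lastCases ?_ (fun i => ?_) i <;> simp
    rw [map_mul, map_mul]
    exact dvd_mul_sub_mul hp hi

theorem evalLast_eq_zero_iff (s : R) {p : MvPolynomial (Fin (n + 1)) R} :
    evalLast s p = 0 ↔ X (Fin.last n) - C s ∣ p := by
  constructor
  · intro h
    simpa [h] using X_last_sub_C_dvd_sub_rename_evalLast s p
  · rintro ⟨q, rfl⟩
    simp

theorem prime_X_last_sub_C [IsDomain R] (s : R) :
    Prime (X (Fin.last n) - C s : MvPolynomial (Fin (n + 1)) R) := by
  have hker : RingHom.ker (evalLast (n := n) s) = Ideal.span {X (Fin.last n) - C s} := by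
    ext p
    rw [RingHom.mem_ker, evalLast_eq_zero_iff, Ideal.mem_span_singleton]
  rw [← Ideal.span_singleton_prime (X_sub_C_ne_zero _ _), ← hker]
  exact RingHom.ker_isPrime _

theorem map_evalLast_totalDegreeLT [Nontrivial R] (s : R) (r : ℕ) :
    (totalDegreeLT (Fin (n + 1)) R r).map (evalLast s).toLinearMap = totalDegreeLT (Fin n) R r := by
  apply le_antisymm
  · rintro - ⟨p, hp, rfl⟩
    refine aeval_mem_totalDegreeLT (fun i => ?_) hp
    refine Fin.lastCases ?_ (fun i => ?_) i <;> simp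
  · intro p hp
    refine ⟨rename Fin.castSucc p, ?_, evalLast_rename_castSucc s p⟩
    exact mem_totalDegreeLT.2 ((mem_totalDegreeLT.1 hp).imp (fun h => by rw [h, map_zero])
      (totalDegree_rename_le _ p).trans_lt)

theorem isCompl_totalDegreeLT_succ [IsDomain R] (s : R)
    {I' I : Ideal (MvPolynomial (Fin (n + 1)) R)} {r : ℕ}
    (hI : ∀ p, (X (Fin.last n) - C s) * p ∈ I ↔ p ∈ I')
    (h' : IsCompl (I'.restrictScalars R) (totalDegreeLT (Fin (n + 1)) R r))
    (h'' : IsCompl ((I.map (evalLast s)).restrictScalars R) (totalDegreeLT (Fin n) R (r + 1))) :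
    IsCompl (I.restrictScalars R) (totalDegreeLT (Fin (n + 1)) R (r + 1)) := by
  have hexact : Function.Exact (LinearMap.mulLeft R (X (Fin.last n) - C s))
      (evalLast s).toLinearMap := fun p =>
    (evalLast_eq_zero_iff s).trans (exists_congr fun _ => eq_comm)
  have hmap : (I.restrictScalars R).map (evalLast s).toLinearMap =
      (I.map (evalLast s)).restrictScalars R := by
    ext p
    exact (Ideal.mem_map_iff_of_surjective (evalLast s) (evalLast_surjective s)).symm
  have hcomap : (totalDegreeLT (Fin (n + 1)) R (r + 1)).comap
      (LinearMap.mulLeft R (X (Fin.last n) - C s)) = totalDegreeLT (Fin (n + 1)) R r := by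
    ext p
    exact X_sub_C_mul_mem_totalDegreeLT_iff (Fin.last n) s
  have hcomapI : (I.restrictScalars R).comap (LinearMap.mulLeft R (X (Fin.last n) - C s)) =
      I'.restrictScalars R := Submodule.ext hI
  refine isCompl_of_exact hexact ?_ ?_
  · rwa [hcomap, hcomapI]
  · rwa [hmap, map_evalLast_totalDegreeLT]

end EvalLast

section Colon

variable {R : Type*} [CommRing R] [IsDomain R]

theorem prime_mul_mem_span_pair_iff {p x z f : R} (hp : Prime p) (hx : ¬p ∣ x) :
    p * f ∈ Ideal.span {x, p * z} ↔ f ∈ Ideal.span {x, z} := by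
  simp only [Ideal.mem_span_pair]
  constructor
  · rintro ⟨a, b, hf⟩
    have hpa : p ∣ a * x := ⟨f - b * z, by linear_combination hf⟩
    obtain ⟨a, rfl⟩ := (hp.dvd_or_dvd hpa).resolve_right hx
    exact ⟨a, b, mul_left_cancel₀ hp.ne_zero (by linear_combination hf)⟩
  · rintro ⟨a, b, rfl⟩
    exact ⟨p * a, b, by ring⟩

theorem exists_eq_mul_of_isRelPrime_of_mul_add_mul_eq_zero [DecompositionMonoid R] {x y a b : R}
    (hxy : IsRelPrime x y) (hx : x ≠ 0) (h : a * x + b * y = 0) :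
    ∃ e, a = e * y ∧ b = -e * x := by
  obtain ⟨e, rfl⟩ : x ∣ b :=
    hxy.dvd_of_dvd_mul_right ⟨-a, by linear_combination h⟩
  exact ⟨-e, mul_left_cancel₀ hx (by linear_combination h), by ring⟩

theorem mul_mem_span_triple_iff {A : Type*} [CommRing A] [IsDomain A] [DecompositionMonoid A]
    {φ : R →+* A} (hφ : Function.Surjective φ) {p x y z f : R} (hp : p ≠ 0)
    (hker : ∀ q, φ q = 0 ↔ p ∣ q) (hx : φ x ≠ 0) (hxy : IsRelPrime (φ x) (φ y)) :
    p * f ∈ Ideal.span {x, y, p * z} ↔ f ∈ Ideal.span {x, y, z} := by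
  simp only [Ideal.span, Submodule.mem_span_triple, smul_eq_mul]
  constructor
  · rintro ⟨a, b, c, hf⟩
    -- Modulo `p` this is a syzygy of two coprime elements, hence a multiple of the Koszul syzygy.
    have hsyz : φ a * φ x + φ b * φ y = 0 := by
      rw [← map_mul, ← map_mul, ← map_add, hker]
      exact ⟨f - c * z, by linear_combination hf⟩
    obtain ⟨e', ha, hb⟩ := exists_eq_mul_of_isRelPrime_of_mul_add_mul_eq_zero hxy hx hsyz
    obtain ⟨e, rfl⟩ := hφ e'
    obtain ⟨a', ha'⟩ := (hker (a - e * y)).1 (by rw [map_sub, map_mul, ha, sub_self])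
    obtain ⟨b', hb'⟩ := (hker (b + e * x)).1 (by rw [map_add, map_mul, hb]; ring)
    exact ⟨a', b', c, mul_left_cancel₀ hp
      (by linear_combination hf - x * ha' - y * hb')⟩
  · rintro ⟨a, b, c, rfl⟩
    exact ⟨p * a, p * b, c, by ring⟩

end Colon

section Recursion

variable {K : Type*} [Field K]

theorem mem_of_C_mul_mem {σ : Type*} {a : K} (ha : a ≠ 0) {I : Ideal (MvPolynomial σ K)}
    {p : MvPolynomial σ K} (h : C a * p ∈ I) : p ∈ I :=
  (I.unit_mul_mem_iff_mem (ha.isUnit.map C)).1 h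

/-- The relations `(R¹_r, R²_r)` modulo `γ`, for an arbitrary sequence `b` of roots in `β` and an
arbitrary sequence `c` of coefficients. They generate the image of `J_r` in `K[α, β]`. -/
noncomputable def relPair (b c : ℕ → K) : ℕ → MvPolynomial (Fin 2) K × MvPolynomial (Fin 2) K
  | 0 => (1, 0)
  | r + 1 => (X 0 * (relPair b c r).1 + C (c r) * (relPair b c r).2,
      (X 1 - C (b r)) * (relPair b c r).1)

/-- The relations `(R¹_r, R²_r, R³_r)` for an arbitrary sequence `b` of roots in `β` and arbitrary
sequences `c`, `d` of coefficients; those of the paper have `b r = (-1) ^ r * 8`, `c r = r ^ 2` and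
`d r = 2 * r / (r + 1)`. -/
noncomputable def relTriple (b c d : ℕ → K) :
    ℕ → MvPolynomial (Fin 3) K × MvPolynomial (Fin 3) K × MvPolynomial (Fin 3) K
  | 0 => (1, 0, 0)
  | r + 1 => (X 0 * (relTriple b c d r).1 + C (c r) * (relTriple b c d r).2.1,
      (X 1 - C (b r)) * (relTriple b c d r).1 + C (d r) * (relTriple b c d r).2.2,
      X 2 * (relTriple b c d r).1)

variable (b : ℕ → K) {c d : ℕ → K}

theorem evalLast_relPair_mem_totalDegreeLT (c : ℕ → K) (s : K) (r : ℕ) :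
    evalLast s (relPair b c r).1 - X 0 ^ r ∈ totalDegreeLT (Fin 1) K r ∧
      evalLast s (relPair b c r).2 ∈ totalDegreeLT (Fin 1) K r := by
  have hX₀ : evalLast s (X 0) = (X 0 : MvPolynomial (Fin 1) K) := evalLast_X_castSucc s 0
  have hX₁ : evalLast s (X 1) = (C s : MvPolynomial (Fin 1) K) := evalLast_X_last s
  induction r with
  | zero => simp [relPair]
  | succ r ih =>
    obtain ⟨ih₁, ih₂⟩ := ih
    constructor
    · have hlead := mul_mem_totalDegreeLT (X 0) ih₁
      rw [totalDegree_X, add_comm] at hlead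
      convert! Submodule.add_mem _ hlead
        (totalDegreeLT_mono r.le_succ (C_mul_mem_totalDegreeLT (c r) ih₂)) using 1
      simp only [relPair, map_add, map_mul, hX₀, evalLast_C]
      ring
    · have hX : (X 0 ^ r : MvPolynomial (Fin 1) K) ∈ totalDegreeLT (Fin 1) K (r + 1) :=
        mem_totalDegreeLT.2 (Or.inr (by rw [totalDegree_X_pow]; exact r.lt_succ_self))
      simp only [relPair, map_mul, map_sub, hX₁, evalLast_C]
      rw [← C_sub]
      refine C_mul_mem_totalDegreeLT _ ?_
      simpa using Submodule.add_mem _ (totalDegreeLT_mono r.le_succ ih₁) hX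

theorem not_X_last_sub_C_dvd_relPair_fst (c : ℕ → K) (s : K) (r : ℕ) :
    ¬(X (Fin.last 1) - C s ∣ (relPair b c r).1) := by
  rw [← evalLast_eq_zero_iff]
  intro h
  refine notMem_totalDegreeLT_of_sub_X_pow_mem (evalLast_relPair_mem_totalDegreeLT b c s r).1 ?_
  rw [h]
  exact Submodule.zero_mem _

theorem relPair_succ_snd (c : ℕ → K) (r : ℕ) :
    (relPair b c (r + 1)).2 = (X (Fin.last 1) - C (b r)) * (relPair b c r).1 :=
  rfl

theorem isRelPrime_relPair (hc : ∀ r ≠ 0, c r ≠ 0) (r : ℕ) :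
    IsRelPrime (relPair b c r).1 (relPair b c r).2 := by
  induction r with
  | zero => exact isRelPrime_one_left
  | succ r ih =>
    rw [relPair_succ_snd]
    refine IsRelPrime.mul_right ?_ ?_
    · exact ((prime_X_last_sub_C (b r)).irreducible.isRelPrime_iff_not_dvd.2
        (not_X_last_sub_C_dvd_relPair_fst b c (b r) (r + 1))).symm
    · rcases eq_or_ne r 0 with rfl | hr
      · exact isRelPrime_one_right
      · intro p hp hpB
        have hpD : p ∣ C (c r) * (relPair b c r).2 :=
          (dvd_add_right (hpB.mul_left (X 0))).1 hp
        exact ih hpB (((hc r hr).isUnit.map C).dvd_mul_left.1 hpD)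

theorem span_relPair (hc : ∀ r ≠ 0, c r ≠ 0) (r : ℕ) :
    Ideal.span {(relPair b c r).1, (relPair b c r).2} =
      Ideal.span {(relPair b c (r + 1)).1, (relPair b c r).1} := by
  have hspan : Ideal.span {(relPair b c r).1, C (c r) * (relPair b c r).2} =
      Ideal.span {(relPair b c r).1, (relPair b c r).2} := by
    rcases eq_or_ne r 0 with rfl | hr
    · simp only [relPair, mul_zero]
    · rw [Ideal.span_insert, Ideal.span_insert,
        Ideal.span_singleton_mul_left_unit ((hc r hr).isUnit.map C)]
  rw [← hspan, relPair, add_comm, Ideal.span_pair_add_mul_right, Ideal.span_pair_comm]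

theorem isCompl_span_relPair (hc : ∀ r ≠ 0, c r ≠ 0) (r : ℕ) :
    IsCompl ((Ideal.span {(relPair b c r).1, (relPair b c r).2}).restrictScalars K)
      (totalDegreeLT (Fin 2) K r) := by
  induction r with
  | zero => simp [relPair, totalDegreeLT, restrictSupport_eq_span, isCompl_top_bot]
  | succ r ih =>
    rw [relPair_succ_snd]
    refine isCompl_totalDegreeLT_succ (n := 1) (b r) (fun p => ?_) ih ?_
    · rw [span_relPair b hc]
      exact prime_mul_mem_span_pair_iff (prime_X_last_sub_C (b r))
        (not_X_last_sub_C_dvd_relPair_fst b c (b r) (r + 1))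
    · have hD : evalLast (b r) ((X (Fin.last 1) - C (b r)) * (relPair b c r).1) = 0 :=
        (evalLast_eq_zero_iff (b r)).2 (dvd_mul_right _ _)
      rw [Ideal.map_span, Set.image_pair, hD, Set.pair_comm, Ideal.span_insert_zero]
      exact isCompl_span_singleton_totalDegreeLT (evalLast_relPair_mem_totalDegreeLT b c _ _).1

theorem evalLast_relTriple (d : ℕ → K) (r : ℕ) :
    evalLast 0 (relTriple b c d r).1 = (relPair b c r).1 ∧
      evalLast 0 (relTriple b c d r).2.1 = (relPair b c r).2 ∧
      evalLast 0 (relTriple b c d r).2.2 = 0 := by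
  have hX₀ : evalLast 0 (X 0) = (X 0 : MvPolynomial (Fin 2) K) := evalLast_X_castSucc 0 0
  have hX₁ : evalLast 0 (X 1) = (X 1 : MvPolynomial (Fin 2) K) := evalLast_X_castSucc 0 1
  have hX₂ : evalLast 0 (X 2) = (C 0 : MvPolynomial (Fin 2) K) := evalLast_X_last 0
  induction r with
  | zero => simp [relTriple, relPair]
  | succ r ih => simp [relTriple, relPair, ih, hX₀, hX₁, hX₂]

theorem relTriple_succ_snd_snd (c d : ℕ → K) (r : ℕ) :
    (relTriple b c d (r + 1)).2.2 = (X (Fin.last 2) - C 0) * (relTriple b c d r).1 := by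
  rw [C_0, sub_zero]
  rfl

/-- The ideal `J_r` generated by the relations `relTriple b c d r`. -/
noncomputable def relIdeal (b c d : ℕ → K) (r : ℕ) : Ideal (MvPolynomial (Fin 3) K) :=
  Ideal.span {(relTriple b c d r).1, (relTriple b c d r).2.1, (relTriple b c d r).2.2}

theorem relIdeal_eq_span (hc : ∀ r ≠ 0, c r ≠ 0) (hd : ∀ r ≠ 0, d r ≠ 0) (r : ℕ) :
    relIdeal b c d r = Ideal.span {(relTriple b c d (r + 1)).1,
      (relTriple b c d (r + 1)).2.1, (relTriple b c d r).1} := by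
  rcases eq_or_ne r 0 with rfl | hr
  · simp [relIdeal, relTriple, Ideal.span_insert]
  apply le_antisymm <;> rw [relIdeal, Ideal.span_le, Set.insert_subset_iff, Set.pair_subset_iff]
  · have h₁ : (relTriple b c d r).1 ∈ Ideal.span {(relTriple b c d (r + 1)).1,
        (relTriple b c d (r + 1)).2.1, (relTriple b c d r).1} := Ideal.subset_span (by simp)
    refine ⟨h₁, mem_of_C_mul_mem (hc r hr) ?_, mem_of_C_mul_mem (hd r hr) ?_⟩
    · exact ((Ideal.add_mem_iff_right _ (Ideal.mul_mem_left _ (X 0) h₁)).1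
        (Ideal.subset_span (Set.mem_insert _ _)))
    · exact ((Ideal.add_mem_iff_right _ (Ideal.mul_mem_left _ (X 1 - C (b r)) h₁)).1
        (Ideal.subset_span (Set.mem_insert_of_mem _ (Set.mem_insert _ _))))
  · rw [← relIdeal]
    have h₁ : (relTriple b c d r).1 ∈ relIdeal b c d r := Ideal.subset_span (by simp)
    refine ⟨Ideal.add_mem _ (Ideal.mul_mem_left _ _ h₁) (Ideal.mul_mem_left _ _ ?_),
      Ideal.add_mem _ (Ideal.mul_mem_left _ _ h₁) (Ideal.mul_mem_left _ _ ?_), h₁⟩ <;>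
      exact Ideal.subset_span (by simp)

theorem isCompl_relIdeal (hc : ∀ r ≠ 0, c r ≠ 0) (hd : ∀ r ≠ 0, d r ≠ 0) (r : ℕ) :
    IsCompl ((relIdeal b c d r).restrictScalars K) (totalDegreeLT (Fin 3) K r) := by
  induction r with
  | zero => simp [relIdeal, relTriple, totalDegreeLT, restrictSupport_eq_span, isCompl_top_bot]
  | succ r ih =>
    obtain ⟨h₁, h₂, h₃⟩ := evalLast_relTriple (c := c) b d (r + 1)
    have hne : (relPair b c (r + 1)).1 ≠ 0 := fun h =>
      not_X_last_sub_C_dvd_relPair_fst b c 0 (r + 1) (h ▸ dvd_zero _)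
    rw [relTriple_succ_snd_snd] at h₃
    rw [relIdeal, relTriple_succ_snd_snd]
    refine isCompl_totalDegreeLT_succ (n := 2) 0 (fun p => ?_) ih ?_
    · rw [relIdeal_eq_span b hc hd]
      refine mul_mem_span_triple_iff (φ := (evalLast (0 : K)).toRingHom) (evalLast_surjective 0)
        (X_sub_C_ne_zero _ _) (fun q => evalLast_eq_zero_iff 0) ?_ ?_
      · exact h₁.trans_ne hne
      · convert! isRelPrime_relPair b hc (r + 1)
    · rw [Ideal.map_span, Set.image_insert_eq, Set.image_pair, h₁, h₂, h₃, Set.pair_comm,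
        Set.insert_comm, Ideal.span_insert_zero]
      exact isCompl_span_relPair b hc (r + 1)

end Recursion

section Basis

theorem natCard_degree_lt (n r : ℕ) :
    Nat.card {m : Fin (n + 1) →₀ ℕ // m.degree < r} = (r + n).choose (n + 1) := by
  have hmem (m : Fin (n + 1) →₀ ℕ) :
      m ∈ (Finset.range r).biUnion Finset.univ.finsuppAntidiag ↔ m.degree < r := by
    simp [Finset.mem_finsuppAntidiag, Finsupp.degree_eq_sum]
  rw [Nat.subtype_card _ hmem, Finset.card_biUnion]
  · simp_rw [Finset.card_finsuppAntidiag_nat_eq_multichoose, Finset.card_univ, Fintype.card_fin]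
    cases r with
    | zero => simp
    | succ r => rw [Nat.sum_range_multichoose, Nat.succ_add_eq_add_succ]
  · exact fun i _ j _ hij => Finset.disjoint_left.2 fun m hi hj => hij (by simp_all)

section Quotient

variable {σ R : Type*} [CommRing R] {I : Ideal (MvPolynomial σ R)} {s : Set (σ →₀ ℕ)}

/-- Given a complement of an ideal spanned by a set of monomials, the basis of the quotient formed
by the classes of these monomials. -/
noncomputable def basisQuotientOfIsCompl
    (h : IsCompl (I.restrictScalars R) (restrictSupport R s)) :
    Module.Basis s R (MvPolynomial σ R ⧸ I) :=
  (basisRestrictSupport R s).map ((Submodule.quotientEquivOfIsCompl _ _ h).symm ≪≫ₗ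
    Submodule.Quotient.restrictScalarsEquiv R I)

theorem basisQuotientOfIsCompl_apply
    (h : IsCompl (I.restrictScalars R) (restrictSupport R s)) (m : s) :
    basisQuotientOfIsCompl h m = Ideal.Quotient.mk I (monomial m.1 1) := by
  have hbasis : (basisRestrictSupport R s m : MvPolynomial σ R) = monomial m.1 1 :=
    congrArg AddMonoidAlgebra.ofCoeff (Finsupp.supportedEquivFinsupp_symm_single s m (1 : R))
  rw [basisQuotientOfIsCompl, Module.Basis.map_apply, LinearEquiv.trans_apply,
    Submodule.quotientEquivOfIsCompl_symm_apply, hbasis]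
  rfl

end Quotient

theorem finrank_quotient_of_isCompl_totalDegreeLT {R : Type*} [CommRing R] [Nontrivial R] {n r : ℕ}
    {I : Ideal (MvPolynomial (Fin (n + 1)) R)}
    (h : IsCompl (I.restrictScalars R) (totalDegreeLT (Fin (n + 1)) R r)) :
    Module.finrank R (MvPolynomial (Fin (n + 1)) R ⧸ I) = (r + n).choose (n + 1) :=
  (Module.finrank_eq_nat_card_basis (basisQuotientOfIsCompl h)).trans (natCard_degree_lt n r)

/-- The exponents of monomials in three variables as triples, in the order `X 0`, `X 1`, `X 2`. -/
noncomputable def exponentEquiv : ℕ × ℕ × ℕ ≃ (Fin 3 →₀ ℕ) where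
  toFun t := Finsupp.equivFunOnFinite.symm ![t.1, t.2.1, t.2.2]
  invFun m := (m 0, m 1, m 2)
  left_inv _ := rfl
  right_inv m := by ext i; fin_cases i <;> rfl

theorem degree_exponentEquiv (t : ℕ × ℕ × ℕ) :
    (exponentEquiv t).degree = t.1 + t.2.1 + t.2.2 := by
  rw [Finsupp.degree_eq_sum, Fin.sum_univ_three]
  rfl

theorem monomial_exponentEquiv {R : Type*} [CommSemiring R] (t : ℕ × ℕ × ℕ) :
    monomial (exponentEquiv t) (1 : R) = X 0 ^ t.1 * X 1 ^ t.2.1 * X 2 ^ t.2.2 := by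
  rw [monomial_eq, C_1, one_mul, Finsupp.prod_fintype _ _ fun _ => pow_zero _,
    Fin.prod_univ_three]
  rfl

/-- The exponents of the monomials of degree less than `r` in three variables. -/
noncomputable def exponentLTEquiv (r : ℕ) :
    {t : ℕ × ℕ × ℕ // t.1 + t.2.1 + t.2.2 < r} ≃ {m : Fin 3 →₀ ℕ | m.degree < r} :=
  exponentEquiv.subtypeEquiv fun t => (degree_exponentEquiv t).symm ▸ Iff.rfl

variable {R : Type*} [CommRing R] {I : Ideal (MvPolynomial (Fin 3) R)} {r : ℕ}

/-- If the polynomials of degree less than `r` form a complement of `I`, the basis of the quotient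
by `I` formed by the classes of the monomials `X 0 ^ i * X 1 ^ j * X 2 ^ k` with `i + j + k < r`. -/
noncomputable def monomialBasis
    (h : IsCompl (I.restrictScalars R) (totalDegreeLT (Fin 3) R r)) :
    Module.Basis {t : ℕ × ℕ × ℕ // t.1 + t.2.1 + t.2.2 < r} R (MvPolynomial (Fin 3) R ⧸ I) :=
  (basisQuotientOfIsCompl h).reindex (exponentLTEquiv r).symm

theorem monomialBasis_apply
    (h : IsCompl (I.restrictScalars R) (totalDegreeLT (Fin 3) R r))
    (t : {t : ℕ × ℕ × ℕ // t.1 + t.2.1 + t.2.2 < r}) :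
    monomialBasis h t = Ideal.Quotient.mk I (X 0 ^ t.1.1 * X 1 ^ t.1.2.1 * X 2 ^ t.1.2.2) := by
  rw [monomialBasis, Module.Basis.reindex_apply, basisQuotientOfIsCompl_apply,
    ← monomial_exponentEquiv]
  rfl

end Basis

theorem stmt1_general {K : Type*} [Field K] (b : ℕ → K) {c d : ℕ → K} (hc : ∀ r ≠ 0, c r ≠ 0)
    (hd : ∀ r ≠ 0, d r ≠ 0) (r : ℕ) :
    LinearIndependent K (fun t : {t : ℕ × ℕ × ℕ // t.1 + t.2.1 + t.2.2 < r} =>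
      Ideal.Quotient.mk (relIdeal b c d r) (X 0 ^ t.1.1 * X 1 ^ t.1.2.1 * X 2 ^ t.1.2.2)) ∧
    Submodule.span K (Set.range (fun t : {t : ℕ × ℕ × ℕ // t.1 + t.2.1 + t.2.2 < r} =>
      Ideal.Quotient.mk (relIdeal b c d r)
        (X 0 ^ t.1.1 * X 1 ^ t.1.2.1 * X 2 ^ t.1.2.2))) = ⊤ ∧
    Module.finrank K (MvPolynomial (Fin 3) K ⧸ relIdeal b c d r) = (r + 2).choose 3 := by
  simp_rw [← monomialBasis_apply (isCompl_relIdeal b hc hd r)]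
  exact ⟨Module.Basis.linearIndependent _, Module.Basis.span_eq _,
    finrank_quotient_of_isCompl_totalDegreeLT (isCompl_relIdeal b hc hd r)⟩

theorem Rr_eq_relTriple (r : ℕ) :
    Rr r = relTriple (fun r => (-1) ^ r * 8) (fun r => (r : ℂ) ^ 2)
      (fun r => (2 * r : ℂ) / (r + 1)) r := by
  induction r with
  | zero => rfl
  | succ r ih =>
    have hroot : (X 1 + C ((-1) ^ (r + 1) * 8) : MvPolynomial (Fin 3) ℂ) =
        X 1 - C ((-1) ^ r * 8) := by
      rw [pow_succ, mul_neg_one, neg_mul, C_neg, sub_eq_add_neg]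
    rw [Rr, relTriple, ih, hroot]

theorem Jr_eq_relIdeal (r : ℕ) :
    Jr r = relIdeal (fun r => (-1) ^ r * 8) (fun r => (r : ℂ) ^ 2)
      (fun r => (2 * r : ℂ) / (r + 1)) r := by
  rw [Jr, relIdeal, Rr_eq_relTriple]

/-- For every r ≥ 0, the residue classes of the monomials α^a·β^b·γ^c with a + b + c < r form a
ℂ-vector-space basis of F_r = ℂ[α,β,γ]/J_r; in particular dim_ℂ F_r = binom(r+2, 3). -/
theorem stmt1 (r : ℕ) :
    LinearIndependent ℂ (fun t : {t : ℕ × ℕ × ℕ // t.1 + t.2.1 + t.2.2 < r} =>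
      Ideal.Quotient.mk (Jr r) (X 0 ^ t.1.1 * X 1 ^ t.1.2.1 * X 2 ^ t.1.2.2)) ∧
    Submodule.span ℂ (Set.range (fun t : {t : ℕ × ℕ × ℕ // t.1 + t.2.1 + t.2.2 < r} =>
      Ideal.Quotient.mk (Jr r) (X 0 ^ t.1.1 * X 1 ^ t.1.2.1 * X 2 ^ t.1.2.2))) = ⊤ ∧
    Module.finrank ℂ (MvPolynomial (Fin 3) ℂ ⧸ Jr r) = (r + 2).choose 3 := by
  rw [Jr_eq_relIdeal]
  exact stmt1_general _ (fun r hr => by simpa) (fun r hr => by simp [hr, r.cast_add_one_ne_zero]) r
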